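/- arXiv:1807.00497 — 2 statements merged into one kernel-verified Lean document; each statement's English description precedes it below -/
import Mathlib

section
/- Let v₊, v₋ ∈ ℝ^{n+2} be null vectors with ζ := ⟨v₊,v₋⟩ > 0 and let b > 0. Then: (i) there is a constant B such that for all p ∈ (0,b) and all t ∈ (0,p], (t/p)^ζ · ‖exp(−ln(t/p)·(v₋∧v₊))‖ ≤ B; and (ii) for every p ∈ (0,b), (t/p)^ζ · exp(−ln(t/p)·(v₋∧v₊)) converges to (v₊v₋*)/ζ as t → 0⁺. -/
open scoped BigOperators Topology
open Filter Set MeasureTheory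

noncomputable section

abbrev E (n : ℕ) := EuclideanSpace ℝ (Fin (n + 2))

/-- Minkowski inner product of signature (n+1,1). -/
def mink {n : ℕ} (x y : E n) : ℝ :=
  ∑ i, (if i = Fin.last (n + 1) then (-1 : ℝ) else 1) * x i * y i

variable {n : ℕ}

lemma mink_comm (x y : E n) : mink x y = mink y x :=
  Finset.sum_congr rfl fun i _ => by ring

lemma mink_add_right (v x y : E n) : mink v (x + y) = mink v x + mink v y := by
  simp [mink, mul_add, Finset.sum_add_distrib]

lemma mink_smul_right (v : E n) (c : ℝ) (x : E n) : mink v (c • x) = c * mink v x := by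
  unfold mink
  rw [Finset.mul_sum]
  refine Finset.sum_congr rfl fun i _ => ?_
  simp only [PiLp.smul_apply, smul_eq_mul]
  ring

lemma mink_add_left (x y v : E n) : mink (x + y) v = mink x v + mink y v := by
  rw [mink_comm, mink_add_right, mink_comm v x, mink_comm v y]

lemma mink_smul_left (c : ℝ) (x v : E n) : mink (c • x) v = c * mink x v := by
  rw [mink_comm, mink_smul_right, mink_comm v x]

/-- `v ∧ w` as an endomorphism: `x ↦ ⟨v,x⟩ w − ⟨w,x⟩ v`. -/
def wedge {n : ℕ} (v w : E n) : E n →L[ℝ] E n :=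
  LinearMap.toContinuousLinearMap
    { toFun := fun x => mink v x • w - mink w x • v
      map_add' := by
        intro x y
        simp only [mink_add_right, add_smul]
        abel
      map_smul' := by
        intro c x
        simp only [mink_smul_right, RingHom.id_apply, mul_smul, smul_sub] }

/-- rank one endomorphism `vw* : x ↦ ⟨x,w⟩ v`. -/
def rankOne {n : ℕ} (v w : E n) : E n →L[ℝ] E n :=
  LinearMap.toContinuousLinearMap
    { toFun := fun x => mink x w • v
      map_add' := by
        intro x y
        simp only [mink_add_left, add_smul]
      map_smul' := by
        intro c x
        simp only [mink_smul_left, RingHom.id_apply, mul_smul] }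

/-- The exponential of a multiple of an idempotent. -/
lemma exp_smul_of_isIdempotentElem {A : Type*} [NormedRing A] [NormedAlgebra ℝ A]
    [CompleteSpace A] {P : A} (hP : IsIdempotentElem P) (c : ℝ) :
    NormedSpace.exp (c • P) = 1 + (Real.exp c - 1) • P := by
  have hpow : (fun k : ℕ => ((k.factorial : ℝ)⁻¹) • (c • P) ^ k) =
      fun k => (if k = 0 then 1 - P else 0) + (c ^ k / k.factorial) • P := by
    funext k
    rcases k with _ | k
    · simp
    · rw [smul_pow, hP.pow_succ_eq, smul_smul, if_neg k.succ_ne_zero, zero_add, div_eq_inv_mul]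
  have hexp : HasSum (fun k : ℕ => c ^ k / k.factorial) (Real.exp c) := by
    rw [Real.exp_eq_exp_ℝ]
    exact NormedSpace.expSeries_div_hasSum_exp c
  have hsum := NormedSpace.exp_series_hasSum_exp' (𝕂 := ℝ) (c • P)
  rw [hpow] at hsum
  rw [hsum.unique ((hasSum_ite_eq 0 (1 - P)).add (hexp.smul_const P)), sub_smul, one_smul]
  abel

/-- The exponential of a combination of two orthogonal idempotents. -/
lemma exp_smul_add_smul_of_orthogonal {A : Type*} [NormedRing A] [NormedAlgebra ℝ A]
    [CompleteSpace A] {P Q : A} (hP : IsIdempotentElem P) (hQ : IsIdempotentElem Q)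
    (hPQ : P * Q = 0) (hQP : Q * P = 0) (c d : ℝ) :
    NormedSpace.exp (c • P + d • Q) = 1 + (Real.exp c - 1) • P + (Real.exp d - 1) • Q := by
  let _ : NormedAlgebra ℚ A := NormedAlgebra.restrictScalars ℚ ℝ A
  have hcomm : Commute (c • P) (d • Q) := by
    have h : Commute P Q := hPQ.trans hQP.symm
    exact (h.smul_left c).smul_right d
  rw [NormedSpace.exp_add_of_commute hcomm, exp_smul_of_isIdempotentElem hP,
    exp_smul_of_isIdempotentElem hQ]
  simp [add_mul, mul_add, hPQ]

section PurePole

variable {A : Type*} [NormedRing A] [NormedAlgebra ℝ A] [CompleteSpace A] {P Q : A} {ζ : ℝ}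

lemma rpow_smul_exp_sub_of_orthogonal (hP : IsIdempotentElem P) (hQ : IsIdempotentElem Q)
    (hPQ : P * Q = 0) (hQP : Q * P = 0) {r : ℝ} (hr : 0 < r) :
    r ^ ζ • NormedSpace.exp ((-Real.log r) • ζ • (P - Q)) =
      r ^ ζ • (1 - P - Q) + P + (r ^ ζ) ^ 2 • Q := by
  have hsplit : (-Real.log r) • ζ • (P - Q) =
      (-(Real.log r * ζ)) • P + (Real.log r * ζ) • Q := by
    module
  rw [hsplit, exp_smul_add_smul_of_orthogonal hP hQ hPQ hQP, Real.exp_neg,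
    ← Real.rpow_def_of_pos hr]
  have hρ : r ^ ζ ≠ 0 := (Real.rpow_pos_of_pos hr _).ne'
  generalize r ^ ζ = ρ at hρ ⊢
  match_scalars <;> field_simp <;> ring

lemma rpow_mul_norm_exp_sub_le (hP : IsIdempotentElem P) (hQ : IsIdempotentElem Q)
    (hPQ : P * Q = 0) (hQP : Q * P = 0) (hζ : 0 ≤ ζ) {r : ℝ} (hr : 0 < r) (hr1 : r ≤ 1) :
    r ^ ζ * ‖NormedSpace.exp ((-Real.log r) • ζ • (P - Q))‖ ≤ ‖1 - P - Q‖ + ‖P‖ + ‖Q‖ := by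
  have hρ : 0 ≤ r ^ ζ := Real.rpow_nonneg hr.le _
  have hρ1 : r ^ ζ ≤ 1 := Real.rpow_le_one hr.le hr1 hζ
  rw [← norm_smul_of_nonneg hρ, rpow_smul_exp_sub_of_orthogonal hP hQ hPQ hQP hr]
  refine norm_add₃_le.trans ?_
  rw [norm_smul_of_nonneg hρ, norm_smul_of_nonneg (sq_nonneg _)]
  gcongr
  · exact mul_le_of_le_one_left (norm_nonneg _) hρ1
  · exact mul_le_of_le_one_left (norm_nonneg _) (pow_le_one₀ hρ hρ1)

lemma tendsto_rpow_smul_exp_sub (hP : IsIdempotentElem P) (hQ : IsIdempotentElem Q)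
    (hPQ : P * Q = 0) (hQP : Q * P = 0) (hζ : 0 < ζ) :
    Tendsto (fun r : ℝ => r ^ ζ • NormedSpace.exp ((-Real.log r) • ζ • (P - Q)))
      (𝓝[>] 0) (𝓝 P) := by
  have hρ : Tendsto (fun r : ℝ => r ^ ζ) (𝓝[>] 0) (𝓝 0) := by
    have h := (Real.continuousAt_rpow_const 0 ζ (Or.inr hζ.le)).tendsto
    rw [Real.zero_rpow hζ.ne'] at h
    exact h.mono_left nhdsWithin_le_nhds
  have hlim := ((hρ.smul_const (1 - P - Q)).add_const P).add ((hρ.pow 2).smul_const Q)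
  simp only [zero_smul, zero_add, ne_eq, OfNat.ofNat_ne_zero, not_false_eq_true, zero_pow,
    add_zero] at hlim
  refine hlim.congr' ?_
  filter_upwards [self_mem_nhdsWithin] with r hr
  exact (rpow_smul_exp_sub_of_orthogonal hP hQ hPQ hQP hr).symm

end PurePole

lemma smul_rankOne_mul_smul_rankOne (c d : ℝ) (v w v' w' : E n) :
    (c • rankOne v w) * (d • rankOne v' w') = (c * d * mink v' w) • rankOne v w' := by
  ext1 x
  change c • mink (d • mink x w' • v') w • v = (c * d * mink v' w) • mink x w' • v
  simp only [mink_smul_left]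
  module

lemma wedge_eq_smul_sub {v w : E n} {c : ℝ} (hc : c ≠ 0) :
    wedge v w = c • (c⁻¹ • rankOne w v - c⁻¹ • rankOne v w) := by
  ext1 x
  change mink v x • w - mink w x • v = c • (c⁻¹ • mink x v • w - c⁻¹ • mink x w • v)
  rw [← smul_sub, smul_inv_smul₀ hc, mink_comm x, mink_comm x]

lemma isIdempotentElem_inv_smul_rankOne {v w : E n} (h : mink v w ≠ 0) :
    IsIdempotentElem ((mink v w)⁻¹ • rankOne v w) := by
  rw [IsIdempotentElem, smul_rankOne_mul_smul_rankOne, inv_mul_cancel_right₀ h]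

lemma smul_rankOne_mul_smul_rankOne_of_mink_eq_zero (c d : ℝ) {v w v' w' : E n}
    (h : mink v' w = 0) : (c • rankOne v w) * (d • rankOne v' w') = 0 := by
  rw [smul_rankOne_mul_smul_rankOne, h, mul_zero]
  exact zero_smul ℝ (rankOne v w')

/-- Proposition 3.1, part 1: bound and limit for Minkowski pure pole forms. -/
theorem stmt1 {n : ℕ} (vp vm : E n)
    (hvp : mink vp vp = 0) (hvm : mink vm vm = 0)
    (hζ : 0 < mink vp vm) (b : ℝ) (hb : 0 < b) :
    (∃ B : ℝ, ∀ p ∈ Set.Ioo (0:ℝ) b, ∀ t ∈ Set.Ioc (0:ℝ) p,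
        (t / p) ^ (mink vp vm) *
          ‖NormedSpace.exp ((-Real.log (t / p)) • wedge vm vp)‖ ≤ B) ∧
    ∀ p ∈ Set.Ioo (0:ℝ) b,
      Tendsto (fun t : ℝ => (t / p) ^ (mink vp vm) •
          NormedSpace.exp ((-Real.log (t / p)) • wedge vm vp))
        (𝓝[>] 0) (𝓝 ((mink vp vm)⁻¹ • rankOne vp vm)) := by
  have hP := isIdempotentElem_inv_smul_rankOne hζ.ne'
  have hQ : IsIdempotentElem ((mink vp vm)⁻¹ • rankOne vm vp) := by
    have h := isIdempotentElem_inv_smul_rankOne (v := vm) (w := vp)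
      (by rw [mink_comm]; exact hζ.ne')
    rwa [mink_comm vm vp] at h
  have hPQ := smul_rankOne_mul_smul_rankOne_of_mink_eq_zero (mink vp vm)⁻¹ (mink vp vm)⁻¹
    (v := vp) (w' := vp) hvm
  have hQP := smul_rankOne_mul_smul_rankOne_of_mink_eq_zero (mink vp vm)⁻¹ (mink vp vm)⁻¹
    (v := vm) (w' := vm) hvp
  rw [wedge_eq_smul_sub hζ.ne']
  constructor
  · exact ⟨_, fun p hp t ht => rpow_mul_norm_exp_sub_le hP hQ hPQ hQP hζ.le
      (div_pos ht.1 hp.1) ((div_le_one hp.1).2 ht.2)⟩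
  · intro p hp
    have hdiv : Tendsto (fun t : ℝ => t / p) (𝓝[>] 0) (𝓝[>] 0) := by
      refine tendsto_nhdsWithin_iff.2 ⟨?_, ?_⟩
      · have h := (continuous_id.div_const p).tendsto (0 : ℝ)
        simp only [id_eq, zero_div] at h
        exact h.mono_left nhdsWithin_le_nhds
      · filter_upwards [self_mem_nhdsWithin] with t ht
        exact div_pos ht hp.1
    exact (tendsto_rpow_smul_exp_sub hP hQ hPQ hQP hζ).comp hdiv
end
end

section
/- Let v₀ ∈ ℝ^{n+2} be null and nonzero, let w̃ ∈ ℝ^{n+2} satisfy ⟨v₀,w̃⟩ = 0 and ‖w̃‖² > 0, set A := v₀∧w̃, let b > 0, and put ℓ(p,t) := 1 + (ln(t/p))². Then: (i) there is a constant B such that for all p,t ∈ (0,b), ℓ(p,t)^{−1}·‖exp(−ln(t/p)·A)‖ ≤ B; and (ii) for every p ∈ (0,b), ℓ(p,t)^{−1}·exp(−ln(t/p)·A) converges to −(‖w̃‖²/2)·v₀v₀* as t → 0⁺. -/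
open scoped BigOperators Topology
open Filter Set MeasureTheory

noncomputable section

variable {n : ℕ}

/-- The exponential of an element whose cube vanishes is a quadratic polynomial. -/
lemma exp_smul_of_pow_three_eq_zero {𝔸 : Type*} [NormedRing 𝔸] [NormedAlgebra ℝ 𝔸]
    {a : 𝔸} (ha : a ^ 3 = 0) (s : ℝ) :
    NormedSpace.exp (s • a) = 1 + s • a + (s ^ 2 / 2) • a ^ 2 := by
  rw [NormedSpace.exp_eq_tsum ℝ]
  have hvanish : ∀ k ∉ Finset.range 3, ((k.factorial : ℝ)⁻¹) • (s • a) ^ k = 0 := by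
    intro k hk
    have hk3 : 3 ≤ k := by simpa using hk
    rw [smul_pow, pow_eq_zero_of_le hk3 ha, smul_zero, smul_zero]
  refine (tsum_eq_sum hvanish).trans ?_
  simp [Finset.sum_range_succ, smul_pow, smul_smul, div_eq_inv_mul]

lemma wedge_apply (v w x : E n) : wedge v w x = mink v x • w - mink w x • v := rfl

lemma rankOne_apply (v w x : E n) : rankOne v w x = mink x w • v := rfl

lemma wedge_apply_self_left {v w : E n} (hv : mink v v = 0) (hvw : mink v w = 0) :
    wedge v w v = 0 := by
  rw [wedge_apply, mink_comm w v, hv, hvw, zero_smul, zero_smul, sub_zero]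

lemma wedge_sq {v w : E n} (hv : mink v v = 0) (hvw : mink v w = 0) :
    wedge v w ^ 2 = (-mink w w) • rankOne v v := by
  ext1 x
  have hw : wedge v w w = -(mink w w • v) := by
    rw [wedge_apply, hvw, zero_smul, zero_sub]
  rw [pow_two, mul_apply_eq_comp, wedge_apply v w x, map_sub, map_smul, map_smul,
    wedge_apply_self_left hv hvw, hw, smul_apply, rankOne_apply,
    mink_comm x v]
  module

lemma wedge_pow_three {v w : E n} (hv : mink v v = 0) (hvw : mink v w = 0) :
    wedge v w ^ 3 = 0 := by
  ext1 x
  rw [pow_succ', mul_apply_eq_comp, wedge_sq hv hvw, smul_apply,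
    rankOne_apply, map_smul, map_smul, wedge_apply_self_left hv hvw, smul_zero, smul_zero,
    zero_apply]

lemma tendsto_sq_atBot : Tendsto (fun x : ℝ => x ^ 2) atBot atTop := by
  simpa only [pow_two, id] using tendsto_id.atBot_mul_atBot₀ tendsto_id

lemma tendsto_inv_one_add_sq_atBot :
    Tendsto (fun x : ℝ => (1 + x ^ 2)⁻¹) atBot (𝓝 0) :=
  tendsto_inv_atTop_zero.comp
    (tendsto_atTop_add_const_left _ _ tendsto_sq_atBot)

lemma tendsto_inv_one_add_sq_mul_sq_atBot :
    Tendsto (fun x : ℝ => (1 + x ^ 2)⁻¹ * x ^ 2) atBot (𝓝 1) := by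
  have h := tendsto_inv_one_add_sq_atBot.const_sub 1
  rw [sub_zero] at h
  refine h.congr fun x => ?_
  have : 1 + x ^ 2 ≠ 0 := by positivity
  field_simp
  ring

lemma tendsto_inv_one_add_sq_mul_atBot :
    Tendsto (fun x : ℝ => (1 + x ^ 2)⁻¹ * x) atBot (𝓝 0) := by
  have h := tendsto_inv_one_add_sq_mul_sq_atBot.mul (tendsto_inv_atBot_zero (𝕜 := ℝ))
  rw [mul_zero] at h
  refine h.congr fun x => ?_
  rcases eq_or_ne x 0 with rfl | hx
  · simp
  · field_simp

/-- Proposition 3.1, part 3: bound and limit for degenerate pure pole forms. -/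
theorem stmt4 {n : ℕ} (v0 w : E n)
    (h0 : mink v0 v0 = 0) (hv0 : v0 ≠ 0)
    (horth : mink v0 w = 0) (hw : 0 < mink w w)
    (b : ℝ) (hb : 0 < b) :
    (∃ B : ℝ, ∀ p ∈ Set.Ioo (0:ℝ) b, ∀ t ∈ Set.Ioo (0:ℝ) b,
        (1 + (Real.log (t / p)) ^ 2)⁻¹ *
          ‖NormedSpace.exp ((-Real.log (t / p)) • wedge v0 w)‖ ≤ B) ∧
    ∀ p ∈ Set.Ioo (0:ℝ) b,
      Tendsto (fun t : ℝ => (1 + (Real.log (t / p)) ^ 2)⁻¹ •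
          NormedSpace.exp ((-Real.log (t / p)) • wedge v0 w))
        (𝓝[>] 0) (𝓝 ((-(mink w w / 2)) • rankOne v0 v0)) := by
  have hexp := exp_smul_of_pow_three_eq_zero (wedge_pow_three h0 horth)
  refine ⟨⟨‖(1 : E n →L[ℝ] E n)‖ + ‖wedge v0 w‖ + ‖wedge v0 w ^ 2‖, fun p _ t _ => ?_⟩,
    fun p hp => ?_⟩
  · rw [hexp]
    generalize Real.log (t / p) = x
    have hpos : 0 < 1 + x ^ 2 := by positivity
    have hx : |x| ≤ 1 + x ^ 2 := abs_le.2 ⟨by nlinarith, by nlinarith⟩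
    rw [inv_mul_le_iff₀ hpos]
    calc ‖1 + (-x) • wedge v0 w + ((-x) ^ 2 / 2) • wedge v0 w ^ 2‖
        ≤ ‖(1 : E n →L[ℝ] E n)‖ + ‖(-x) • wedge v0 w‖ + ‖((-x) ^ 2 / 2) • wedge v0 w ^ 2‖ :=
          norm_add₃_le
      _ = 1 * ‖(1 : E n →L[ℝ] E n)‖ + |x| * ‖wedge v0 w‖ + x ^ 2 / 2 * ‖wedge v0 w ^ 2‖ := by
          rw [norm_smul, norm_smul, Real.norm_eq_abs, Real.norm_eq_abs, abs_neg, neg_sq,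
            abs_of_nonneg (by positivity : 0 ≤ x ^ 2 / 2), one_mul]
      _ ≤ (1 + x ^ 2) * ‖(1 : E n →L[ℝ] E n)‖ + (1 + x ^ 2) * ‖wedge v0 w‖
          + (1 + x ^ 2) * ‖wedge v0 w ^ 2‖ := by
          gcongr <;> nlinarith
      _ = _ := by ring
  · have hlog : Tendsto (fun t : ℝ => Real.log (t / p)) (𝓝[>] 0) atBot := by
      refine Real.tendsto_log_nhdsGT_zero.comp (tendsto_nhdsWithin_iff.2 ⟨?_, ?_⟩)
      · have h : Tendsto (fun t : ℝ => t / p) (𝓝 0) (𝓝 (0 / p)) := tendsto_id.div_const p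
        rw [zero_div] at h
        exact h.mono_left nhdsWithin_le_nhds
      · filter_upwards [self_mem_nhdsWithin] with t ht
        exact div_pos ht hp.1
    have hlim := ((tendsto_inv_one_add_sq_atBot.smul_const (1 : E n →L[ℝ] E n)).sub
      (tendsto_inv_one_add_sq_mul_atBot.smul_const (wedge v0 w))).add
      (tendsto_inv_one_add_sq_mul_sq_atBot.smul_const ((1 / 2 : ℝ) • wedge v0 w ^ 2))
    have hval : (0 : ℝ) • (1 : E n →L[ℝ] E n) - (0 : ℝ) • wedge v0 w
        + (1 : ℝ) • (1 / 2 : ℝ) • wedge v0 w ^ 2 = (-(mink w w / 2)) • rankOne v0 v0 := by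
      rw [wedge_sq h0 horth]
      module
    rw [hval] at hlim
    refine (hlim.comp hlog).congr fun t => ?_
    rw [hexp, Function.comp_apply]
    module
end
end
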